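/- Let f ∈ C_b^4(ℝ^d) be a bounded probability density and let K be a spherically symmetric kernel on ℝ^d satisfying (K0)–(K2), K(z) = κ(‖z‖). Let Z have density K, R := ‖Z‖, b := E(R⁴)/(E(R⁶) − E(R⁴)²/d), a := 1 + b E(R⁴)/d, and set p_j(z) := a z_j − b ‖z‖² z_j. Fix x_o ∈ ℝ^d. Then for each j ∈ {1,…,d} and all sequences h_n → 0+, x_n → x_o, ∫ K(z) p_j(z) f(x_n + h_n z) dz = h_n f^{(e_j)}(x_n) + o(h_n⁴). -/

import Mathlib

open MeasureTheory Filter Topology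

noncomputable section

/-- `ℝ^d` as a pi type; `volume` is `d`-dimensional Lebesgue measure. -/
abbrev Vec (d : ℕ) := Fin d → ℝ

/-- The Euclidean norm on `ℝ^d`. -/
def euclNorm {d : ℕ} (z : Vec d) : ℝ := Real.sqrt (∑ i, z i ^ 2)

/-! The weight `K p_j` is odd, so it annihilates the Taylor terms of even order in `h z`. In polar
coordinates the integral of a radial profile `γ(‖z‖)` against a homogeneous function of degree `k`
depends on `γ` only through its radial moment `∫ γ(‖z‖) ‖z‖ ^ k`. Applied to `γ = κ (a - b ‖·‖²)`,
this leaves two scalar conditions, `a d - b E(R⁴) = d` for the linear term to reproduce the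
gradient and `a E(R⁴) - b E(R⁶) = 0` for the cubic term to vanish, which are solved by the given
`a` and `b`. Since `R²` has no atoms, Cauchy–Schwarz is strict and the denominator of `b` is
nonzero. The Taylor remainder divided by `h⁴` converges by dominated convergence to the integral of
the fourth-order term, which vanishes by oddness. -/

open Finset Set
open scoped Nat

section Taylor

variable {E F : Type*} [NormedAddCommGroup E] [NormedSpace ℝ E]
  [NormedAddCommGroup F] [NormedSpace ℝ F]

lemma multilinear_diag_smul {k : ℕ} (A : E [×k]→L[ℝ] F) (c : ℝ) (z : E) :
    A (fun _ => c • z) = c ^ k • A (fun _ => z) := by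
  simpa using A.map_smul_univ (fun _ => c) (fun _ => z)

lemma norm_multilinear_diag_le {k : ℕ} (A : E [×k]→L[ℝ] F) (z : E) :
    ‖A (fun _ => z)‖ ≤ ‖A‖ * ‖z‖ ^ k := by
  simpa using A.le_opNorm (fun _ => z)

lemma continuous_multilinear_diag {k : ℕ} (A : E [×k]→L[ℝ] F) :
    Continuous fun z => A (fun _ => z) :=
  A.cont.comp (by fun_prop)

/-- The remainder in the expansion of `f (x + y)` about `x` by its Taylor terms of order
less than `n`. -/
def taylorRemainder (f : E → F) (n : ℕ) (x y : E) : F :=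
  f (x + y) - ∑ k ∈ range n, (k ! : ℝ)⁻¹ • iteratedFDeriv ℝ k f x (fun _ => y)

variable {f : E → F} {n : ℕ}

lemma continuous_taylorRemainder (hf : Continuous f) (x : E) :
    Continuous (taylorRemainder f n x) := by
  have hterm (k : ℕ) := continuous_multilinear_diag (iteratedFDeriv ℝ k f x)
  unfold taylorRemainder
  fun_prop

lemma integral_one_sub_pow_smul [CompleteSpace F] (n : ℕ) (v : F) :
    ∫ t in (0 : ℝ)..1, (1 - t) ^ n • v = ((n : ℝ) + 1)⁻¹ • v := by
  rw [intervalIntegral.integral_smul_const,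
    intervalIntegral.integral_comp_sub_left (fun t : ℝ => t ^ n) 1]
  simp

lemma taylorRemainder_succ_sub_eq_integral [CompleteSpace F] (hf : ContDiff ℝ (n + 1) f)
    (x y : E) (A : E [×(n + 1)]→L[ℝ] F) :
    taylorRemainder f (n + 1) x y - ((n + 1)! : ℝ)⁻¹ • A (fun _ => y) =
      (n ! : ℝ)⁻¹ • ∫ t in (0 : ℝ)..1,
        (1 - t) ^ n • (iteratedFDeriv ℝ (n + 1) f (x + t • y) - A) (fun _ => y) := by
  have : Continuous fun t : ℝ => iteratedFDeriv ℝ (n + 1) f (x + t • y) (fun _ => y) := by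
    have : Continuous (iteratedFDeriv ℝ (n + 1) f) :=
      hf.continuous_iteratedFDeriv (by norm_cast)
    fun_prop
  have hfactorial : ((n + 1)! : ℝ)⁻¹ = (n ! : ℝ)⁻¹ * ((n : ℝ) + 1)⁻¹ := by
    rw [Nat.factorial_succ]; push_cast; rw [mul_inv, mul_comm]
  simp only [sub_apply, smul_sub]
  rw [intervalIntegral.integral_sub
      (Continuous.intervalIntegrable (by fun_prop) _ _)
      (Continuous.intervalIntegrable (by fun_prop) _ _),
    integral_one_sub_pow_smul, smul_sub, smul_smul, ← hfactorial, taylorRemainder,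
    map_add_eq_sum_add_integral_iteratedFDeriv fun _ _ => hf.contDiffAt, add_sub_cancel_left]

lemma norm_taylorRemainder_succ_sub_le [CompleteSpace F] (hf : ContDiff ℝ (n + 1) f)
    {x y : E} {A : E [×(n + 1)]→L[ℝ] F} {ε : ℝ}
    (hA : ∀ t ∈ Icc (0 : ℝ) 1, ‖iteratedFDeriv ℝ (n + 1) f (x + t • y) - A‖ ≤ ε) :
    ‖taylorRemainder f (n + 1) x y - ((n + 1)! : ℝ)⁻¹ • A (fun _ => y)‖ ≤ ε * ‖y‖ ^ (n + 1) := by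
  have hintegrand : ∀ t ∈ uIoc (0 : ℝ) 1,
      ‖(1 - t) ^ n • (iteratedFDeriv ℝ (n + 1) f (x + t • y) - A) (fun _ => y)‖ ≤
        ε * ‖y‖ ^ (n + 1) := by
    intro t ht
    rw [uIoc_of_le zero_le_one] at ht
    have hweight : ‖(1 - t) ^ n‖ ≤ 1 := by
      rw [norm_pow, Real.norm_of_nonneg (by linarith [ht.2])]
      exact pow_le_one₀ (by linarith [ht.2]) (by linarith [ht.1])
    calc ‖(1 - t) ^ n • (iteratedFDeriv ℝ (n + 1) f (x + t • y) - A) (fun _ => y)‖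
        ≤ 1 * (‖iteratedFDeriv ℝ (n + 1) f (x + t • y) - A‖ * ‖y‖ ^ (n + 1)) := by
          rw [norm_smul]
          gcongr
          exact norm_multilinear_diag_le _ _
      _ ≤ ε * ‖y‖ ^ (n + 1) := by
          rw [one_mul]
          gcongr
          exact hA t (Ioc_subset_Icc_self ht)
  have hintegral := intervalIntegral.norm_integral_le_of_norm_le_const hintegrand
  have hfactorial : ‖(n ! : ℝ)⁻¹‖ ≤ 1 := by
    rw [norm_inv, Real.norm_natCast]
    exact inv_le_one_of_one_le₀ (mod_cast n.factorial_pos)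
  rw [taylorRemainder_succ_sub_eq_integral hf, norm_smul]
  simpa using mul_le_mul hfactorial hintegral (norm_nonneg _) zero_le_one

lemma norm_taylorRemainder_succ_le [CompleteSpace F] (hf : ContDiff ℝ (n + 1) f) {C : ℝ}
    (hC : ∀ x, ‖iteratedFDeriv ℝ (n + 1) f x‖ ≤ C) (x y : E) :
    ‖taylorRemainder f (n + 1) x y‖ ≤ C * ‖y‖ ^ (n + 1) := by
  simpa using norm_taylorRemainder_succ_sub_le (A := 0) hf (x := x) (y := y)
    fun t _ => by simpa using hC (x + t • y)

variable {ι : Type*} {l : Filter ι} {x y : ι → E} {x₀ : E} {h : ι → ℝ}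

lemma taylorRemainder_succ_sub_isLittleO [CompleteSpace F] (hf : ContDiff ℝ (n + 1) f)
    (hx : Tendsto x l (𝓝 x₀)) (hy : Tendsto y l (𝓝 0)) :
    (fun i => taylorRemainder f (n + 1) (x i) (y i) -
        ((n + 1)! : ℝ)⁻¹ • iteratedFDeriv ℝ (n + 1) f x₀ (fun _ => y i)) =o[l]
      fun i => ‖y i‖ ^ (n + 1) := by
  refine Asymptotics.isLittleO_iff.2 fun ε hε => ?_
  have hderiv : ContinuousAt (iteratedFDeriv ℝ (n + 1) f) x₀ :=
    (hf.continuous_iteratedFDeriv (by norm_cast)).continuousAt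
  obtain ⟨δ, hδ, hclose⟩ := Metric.continuousAt_iff.1 hderiv ε hε
  have hsum : Tendsto (fun i => ‖x i - x₀‖ + ‖y i‖) l (𝓝 0) := by
    simpa using (tendsto_iff_norm_sub_tendsto_zero.1 hx).add hy.norm
  filter_upwards [hsum.eventually_lt_const hδ] with i hi
  rw [norm_pow, norm_norm]
  refine norm_taylorRemainder_succ_sub_le hf fun t ht => ?_
  rw [← dist_eq_norm]
  refine (hclose ?_).le
  calc dist (x i + t • y i) x₀ = ‖(x i - x₀) + t • y i‖ := by rw [dist_eq_norm, add_sub_right_comm]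
    _ ≤ ‖x i - x₀‖ + 1 * ‖y i‖ := by
        refine (norm_add_le _ _).trans ?_
        rw [norm_smul, Real.norm_of_nonneg ht.1]
        gcongr
        exact ht.2
    _ < δ := by rwa [one_mul]

lemma tendsto_inv_pow_smul_taylorRemainder_succ [CompleteSpace F] (hf : ContDiff ℝ (n + 1) f)
    (hx : Tendsto x l (𝓝 x₀)) (hh : Tendsto h l (𝓝[≠] 0)) (z : E) :
    Tendsto (fun i => (h i ^ (n + 1))⁻¹ • taylorRemainder f (n + 1) (x i) (h i • z)) l
      (𝓝 (((n + 1)! : ℝ)⁻¹ • iteratedFDeriv ℝ (n + 1) f x₀ (fun _ => z))) := by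
  obtain ⟨hh₀, hne⟩ := tendsto_nhdsWithin_iff.1 hh
  have hy : Tendsto (fun i => h i • z) l (𝓝 0) := by simpa using hh₀.smul_const z
  have hscale : (fun i => ‖h i • z‖ ^ (n + 1)) =O[l] fun i => h i ^ (n + 1) := by
    refine .pow (.of_bound ‖z‖ (.of_forall fun i => ?_)) (n + 1)
    rw [norm_norm, norm_smul, mul_comm]
  have herror := ((taylorRemainder_succ_sub_isLittleO hf hx hy).trans_isBigO
    hscale).tendsto_inv_smul_nhds_zero
  rw [← tendsto_sub_nhds_zero_iff]
  refine herror.congr' ?_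
  filter_upwards [hne] with i hi
  rw [multilinear_diag_smul, smul_sub, smul_comm _ (h i ^ (n + 1)),
    inv_smul_smul₀ (pow_ne_zero _ hi)]

end Taylor

section LocalizedMoments

variable {E F : Type*} [NormedAddCommGroup E] [MeasurableSpace E]
  [NormedAddCommGroup F] [NormedSpace ℝ F] {μ : Measure E} {w : E → ℝ} {n : ℕ}

lemma integrable_smul_of_norm_le_mul_pow {k : ℕ} {G : E → F} {C : ℝ}
    (hw : AEStronglyMeasurable w μ) (hwk : Integrable (fun z => w z * ‖z‖ ^ k) μ)
    (hG : AEStronglyMeasurable G μ) (hGC : ∀ z, ‖G z‖ ≤ C * ‖z‖ ^ k) :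
    Integrable (fun z => w z • G z) μ := by
  refine (hwk.norm.const_mul C).mono' (hw.smul hG) (.of_forall fun z => ?_)
  calc ‖w z • G z‖ ≤ ‖w z‖ * (C * ‖z‖ ^ k) := by rw [norm_smul]; gcongr; exact hGC z
    _ = C * ‖w z * ‖z‖ ^ k‖ := by rw [norm_mul, norm_pow, norm_norm]; ring

variable [BorelSpace E] [SecondCountableTopology E] [NormedSpace ℝ E] {f : E → F}

lemma integrable_smul_multilinear_diag {k : ℕ} (hw : AEStronglyMeasurable w μ)
    (hwk : Integrable (fun z => w z * ‖z‖ ^ k) μ) (A : E [×k]→L[ℝ] F) :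
    Integrable (fun z => w z • A (fun _ => z)) μ :=
  integrable_smul_of_norm_le_mul_pow hw hwk
    (continuous_multilinear_diag A).aestronglyMeasurable (norm_multilinear_diag_le A)

lemma integral_smul_comp_add_smul_eq [CompleteSpace F] (hf : ContDiff ℝ (n + 1) f) {C : ℝ}
    (hC : ∀ x, ‖iteratedFDeriv ℝ (n + 1) f x‖ ≤ C)
    (hmom : ∀ k ≤ n + 1, Integrable (fun z => w z * ‖z‖ ^ k) μ) (x : E) (h : ℝ) :
    ∫ z, w z • f (x + h • z) ∂μ =
      ∑ k ∈ range (n + 1),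
        ((k ! : ℝ)⁻¹ * h ^ k) • ∫ z, w z • iteratedFDeriv ℝ k f x (fun _ => z) ∂μ +
      ∫ z, w z • taylorRemainder f (n + 1) x (h • z) ∂μ := by
  have hw : AEStronglyMeasurable w μ := by
    simpa using (hmom 0 (Nat.zero_le _)).aestronglyMeasurable
  have hterm : ∀ k ∈ range (n + 1), Integrable (fun z =>
      ((k ! : ℝ)⁻¹ * h ^ k) • w z • iteratedFDeriv ℝ k f x (fun _ => z)) μ := fun k hk =>
    (integrable_smul_multilinear_diag hw (hmom k (Finset.mem_range.1 hk).le) _).smul _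
  have hrem : Integrable (fun z => w z • taylorRemainder f (n + 1) x (h • z)) μ := by
    refine integrable_smul_of_norm_le_mul_pow (C := C * |h| ^ (n + 1)) hw (hmom _ le_rfl)
      ((continuous_taylorRemainder hf.continuous x).comp (by fun_prop)).aestronglyMeasurable
      fun z => ?_
    refine (norm_taylorRemainder_succ_le hf hC x (h • z)).trans_eq ?_
    rw [norm_smul, Real.norm_eq_abs, mul_pow, mul_assoc]
  simp only [← integral_smul]
  rw [← integral_finsetSum _ hterm, ← integral_add (integrable_finsetSum _ hterm) hrem]
  refine integral_congr_ae (.of_forall fun z => ?_)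
  simp only [taylorRemainder, multilinear_diag_smul, smul_sub, smul_smul, Finset.smul_sum]
  simp only [mul_comm (w z), mul_assoc, add_sub_cancel]

theorem tendsto_integral_smul_comp_add_smul_sub_sum [CompleteSpace F]
    (hf : ContDiff ℝ (n + 1) f) {C : ℝ} (hC : ∀ x, ‖iteratedFDeriv ℝ (n + 1) f x‖ ≤ C)
    (hmom : ∀ k ≤ n + 1, Integrable (fun z => w z * ‖z‖ ^ k) μ)
    {ι : Type*} {l : Filter ι} [l.IsCountablyGenerated] {x : ι → E} {x₀ : E} {h : ι → ℝ}
    (hx : Tendsto x l (𝓝 x₀)) (hh : Tendsto h l (𝓝[≠] 0)) :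
    Tendsto (fun i => (h i ^ (n + 1))⁻¹ • (∫ z, w z • f (x i + h i • z) ∂μ -
        ∑ k ∈ range (n + 1), ((k ! : ℝ)⁻¹ * h i ^ k) •
          ∫ z, w z • iteratedFDeriv ℝ k f (x i) (fun _ => z) ∂μ)) l
      (𝓝 (((n + 1)! : ℝ)⁻¹ • ∫ z, w z • iteratedFDeriv ℝ (n + 1) f x₀ (fun _ => z) ∂μ)) := by
  have hw : AEStronglyMeasurable w μ := by
    simpa using (hmom 0 (Nat.zero_le _)).aestronglyMeasurable
  simp only [integral_smul_comp_add_smul_eq hf hC hmom, add_sub_cancel_left, ← integral_smul,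
    smul_comm _ (w _)]
  refine tendsto_integral_filter_of_dominated_convergence (fun z => C * ‖w z * ‖z‖ ^ (n + 1)‖)
    (.of_forall fun i => ?_) ?_ ((hmom _ le_rfl).norm.const_mul C) (.of_forall fun z =>
      (tendsto_inv_pow_smul_taylorRemainder_succ hf hx hh z).const_smul (w z))
  · have hcont : Continuous fun z =>
        (h i ^ (n + 1))⁻¹ • taylorRemainder f (n + 1) (x i) (h i • z) :=
      ((continuous_taylorRemainder hf.continuous (x i)).comp (by fun_prop)).const_smul _
    exact hw.smul hcont.aestronglyMeasurable
  · filter_upwards [(tendsto_nhdsWithin_iff.1 hh).2] with i hi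
    refine .of_forall fun z => ?_
    have hpos : 0 < |h i| ^ (n + 1) := pow_pos (abs_pos.2 hi) _
    calc ‖w z • (h i ^ (n + 1))⁻¹ • taylorRemainder f (n + 1) (x i) (h i • z)‖
        ≤ ‖w z‖ * ((|h i| ^ (n + 1))⁻¹ * (C * ‖h i • z‖ ^ (n + 1))) := by
          rw [norm_smul, norm_smul, norm_inv, norm_pow, Real.norm_eq_abs (h i)]
          gcongr
          exact norm_taylorRemainder_succ_le hf hC _ _
      _ = C * ‖w z * ‖z‖ ^ (n + 1)‖ := by
          rw [norm_smul, norm_mul, norm_pow, norm_norm, Real.norm_eq_abs (h i), mul_pow]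
          field_simp

end LocalizedMoments

section Integration

variable {α : Type*} [MeasurableSpace α] {μ : Measure α}

lemma integral_eq_zero_of_odd {F : Type*} [NormedAddCommGroup F] [NormedSpace ℝ F]
    [AddGroup α] [MeasurableNeg α] [μ.IsNegInvariant] {g : α → F}
    (hg : Function.Odd g) : ∫ z, g z ∂μ = 0 := by
  have hneg : ∫ z, g z ∂μ = -∫ z, g z ∂μ := by
    rw [← integral_neg, ← integral_neg_eq_self g μ]
    exact integral_congr_ae (.of_forall hg)
  have : IsAddTorsionFree F := .of_isTorsionFree ℝ F
  exact self_eq_neg.1 hneg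

lemma integrable_mul_pow_of_le {w g : α → ℝ} {k n : ℕ} (hkn : k ≤ n) (hg : ∀ z, 0 ≤ g z)
    (hgm : AEStronglyMeasurable g μ) (hw : Integrable w μ)
    (hwn : Integrable (fun z => w z * g z ^ n) μ) : Integrable (fun z => w z * g z ^ k) μ := by
  refine (hw.norm.add hwn.norm).mono' (hw.aestronglyMeasurable.mul (hgm.pow k))
    (.of_forall fun z => ?_)
  have hpow : g z ^ k ≤ 1 + g z ^ n := by
    rcases le_total (g z) 1 with hle | hge
    · exact (pow_le_one₀ (hg z) hle).trans (le_add_of_nonneg_right (pow_nonneg (hg z) n))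
    · exact (pow_le_pow_right₀ hge hkn).trans (le_add_of_nonneg_left zero_le_one)
  calc ‖w z * g z ^ k‖ = ‖w z‖ * g z ^ k := by
        rw [norm_mul, Real.norm_of_nonneg (pow_nonneg (hg z) k)]
    _ ≤ ‖w z‖ * (1 + g z ^ n) := by gcongr
    _ = ‖w z‖ + ‖w z * g z ^ n‖ := by
        rw [norm_mul, Real.norm_of_nonneg (pow_nonneg (hg z) n), mul_add, mul_one]

lemma integral_mul_pos_of_ae_pos {w q : α → ℝ} (hw : 0 ≤ w) (hw₀ : ∫ z, w z ∂μ ≠ 0)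
    (hq : ∀ᵐ z ∂μ, 0 < q z) (hwq : Integrable (fun z => w z * q z) μ) :
    0 < ∫ z, w z * q z ∂μ := by
  have hnonneg : 0 ≤ᵐ[μ] fun z => w z * q z := by
    filter_upwards [hq] with z hz using mul_nonneg (hw z) hz.le
  refine (integral_nonneg_of_ae hnonneg).lt_of_ne' fun hzero => hw₀ ?_
  rw [integral_eq_zero_iff_of_nonneg_ae hnonneg hwq] at hzero
  refine integral_eq_zero_of_ae ?_
  filter_upwards [hzero, hq] with z hz hqz using (mul_eq_zero.1 hz).resolve_right hqz.ne'

lemma sq_integral_mul_lt_integral_mul_integral_mul_sq {w g : α → ℝ} (hw : 0 ≤ w)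
    (hw₀ : ∫ z, w z ∂μ ≠ 0) (hg : ∀ c, ∀ᵐ z ∂μ, g z ≠ c)
    (hwg : Integrable (fun z => w z * g z) μ) (hwg₂ : Integrable (fun z => w z * g z ^ 2) μ) :
    (∫ z, w z * g z ∂μ) ^ 2 < (∫ z, w z ∂μ) * ∫ z, w z * g z ^ 2 ∂μ := by
  have hwi : Integrable w μ := .of_integral_ne_zero hw₀
  have hpos : 0 < ∫ z, w z ∂μ := (integral_nonneg hw).lt_of_ne' hw₀
  set c := (∫ z, w z * g z ∂μ) / ∫ z, w z ∂μ with hc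
  have hexpand : (fun z => w z * (g z - c) ^ 2) =
      fun z => w z * g z ^ 2 - 2 * c * (w z * g z) + c ^ 2 * w z := by
    ext z; ring
  have hcross : Integrable (fun z => w z * g z ^ 2 - 2 * c * (w z * g z)) μ :=
    hwg₂.sub (hwg.const_mul _)
  have hvariance : 0 < ∫ z, w z * (g z - c) ^ 2 ∂μ := by
    refine integral_mul_pos_of_ae_pos hw hw₀ ?_ (hexpand ▸ hcross.add (hwi.const_mul _))
    filter_upwards [hg c] with z hz using sq_pos_of_ne_zero (sub_ne_zero.2 hz)
  rw [hexpand, integral_add hcross (hwi.const_mul _), integral_sub hwg₂ (hwg.const_mul _),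
    integral_const_mul, integral_const_mul, hc] at hvariance
  field_simp at hvariance
  linarith

end Integration

section Polar

variable {E F : Type*} [NormedAddCommGroup E] [NormedSpace ℝ E] [FiniteDimensional ℝ E]
  [Nontrivial E] [MeasurableSpace E] [BorelSpace E] (μ : Measure E) [μ.IsAddHaarMeasure]
  [NormedAddCommGroup F] [NormedSpace ℝ F] {P : E → F} {k : ℕ}

lemma integral_radial_smul_homogeneous_eq_smul
    (hP : ∀ t : ℝ, 0 < t → ∀ z, P (t • z) = t ^ k • P z) (γ : ℝ → ℝ) :
    ∫ z, γ ‖z‖ • P z ∂μ =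
      (∫ r : Set.Ioi (0 : ℝ), γ r * (r : ℝ) ^ k ∂.volumeIoiPow (Module.finrank ℝ E - 1)) •
        ∫ θ : Metric.sphere (0 : E) 1, P θ ∂μ.toSphere := by
  have hpolar (z : ({0}ᶜ : Set E)) :
      γ ‖z.1‖ • P z = (γ ‖z.1‖ * ‖z.1‖ ^ k) • P (‖z.1‖⁻¹ • z.1) := by
    have hz : 0 < ‖z.1‖ := norm_pos_iff.2 z.2
    rw [mul_smul, ← hP _ hz, smul_inv_smul₀ hz.ne']
  calc ∫ z, γ ‖z‖ • P z ∂μ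
      = ∫ z : ({0}ᶜ : Set E), (γ ‖z.1‖ * ‖z.1‖ ^ k) • P (‖z.1‖⁻¹ • z.1) ∂μ.comap (↑) := by
        simp only [← hpolar]
        rw [integral_subtype_comap (measurableSet_singleton _).compl fun z => γ ‖z‖ • P z,
          restrict_compl_singleton]
    _ = ∫ p : Metric.sphere (0 : E) 1 × Set.Ioi (0 : ℝ), (γ p.2 * (p.2 : ℝ) ^ k) • P p.1
          ∂μ.toSphere.prod (.volumeIoiPow (Module.finrank ℝ E - 1)) := by
        rw [← μ.measurePreserving_homeomorphUnitSphereProd.integral_comp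
          (Homeomorph.measurableEmbedding _)]
        simp
    _ = _ := by
        rw [← integral_prod_swap]
        exact integral_prod_smul (𝕜 := ℝ) (fun r : Set.Ioi (0 : ℝ) => γ r * (r : ℝ) ^ k)
          (fun θ : Metric.sphere (0 : E) 1 => P θ)

lemma integral_radial_smul_homogeneous
    (hP : ∀ t : ℝ, 0 < t → ∀ z, P (t • z) = t ^ k • P z) (γ : ℝ → ℝ) :
    ∫ z, γ ‖z‖ • P z ∂μ =
      (∫ z, γ ‖z‖ * ‖z‖ ^ k ∂μ) • ⨍ θ : Metric.sphere (0 : E) 1, P θ ∂μ.toSphere := by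
  have hmass : μ.toSphere.real Set.univ ≠ 0 :=
    have : NeZero μ.toSphere := ⟨μ.toSphere_ne_zero⟩
    measureReal_univ_ne_zero
  have hmoment := integral_radial_smul_homogeneous_eq_smul μ (P := fun z : E => ‖z‖ ^ k) (k := k)
    (fun t ht z => by rw [norm_smul, Real.norm_of_nonneg ht.le, mul_pow, smul_eq_mul]) γ
  simp only [smul_eq_mul, norm_eq_of_mem_sphere, one_pow, integral_const, mul_one] at hmoment
  rw [integral_radial_smul_homogeneous_eq_smul μ hP, hmoment, average_eq, smul_smul,
    mul_inv_cancel_right₀ hmass]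

end Polar

section EuclNorm

variable {d : ℕ}

lemma euclNorm_eq_norm_toLp (z : Vec d) : euclNorm z = ‖WithLp.toLp 2 z‖ := by
  simp [euclNorm, EuclideanSpace.norm_eq]

lemma euclNorm_nonneg (z : Vec d) : 0 ≤ euclNorm z := Real.sqrt_nonneg _

lemma euclNorm_sq (z : Vec d) : euclNorm z ^ 2 = ∑ i, z i ^ 2 :=
  Real.sq_sqrt (Finset.sum_nonneg fun i _ => sq_nonneg (z i))

lemma even_euclNorm : Function.Even (euclNorm : Vec d → ℝ) := fun z => by
  simp [euclNorm]

lemma continuous_euclNorm : Continuous (euclNorm : Vec d → ℝ) := by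
  unfold euclNorm
  fun_prop

lemma abs_apply_le_euclNorm (z : Vec d) (i : Fin d) : |z i| ≤ euclNorm z := by
  rw [euclNorm_eq_norm_toLp]
  exact PiLp.norm_apply_le (WithLp.toLp 2 z) i

lemma norm_le_euclNorm (z : Vec d) : ‖z‖ ≤ euclNorm z :=
  (pi_norm_le_iff_of_nonneg (euclNorm_nonneg z)).2 (abs_apply_le_euclNorm z)

lemma integral_comp_toLp {F : Type*} [NormedAddCommGroup F] [NormedSpace ℝ F]
    (g : EuclideanSpace ℝ (Fin d) → F) :
    ∫ z : Vec d, g (WithLp.toLp 2 z) = ∫ z, g z :=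
  (PiLp.volume_preserving_toLp (Fin d)).integral_comp
    (MeasurableEquiv.toLp 2 (Fin d → ℝ)).measurableEmbedding g

variable [Nonempty (Fin d)]

lemma ae_euclNorm_ne (r : ℝ) : ∀ᵐ z : Vec d, euclNorm z ≠ r := by
  have hsphere : ∀ᵐ z : EuclideanSpace ℝ (Fin d), ‖z‖ ≠ r := by
    rw [ae_iff]
    simpa [Metric.sphere] using Measure.addHaar_sphere volume (0 : EuclideanSpace ℝ (Fin d)) r
  simpa only [euclNorm_eq_norm_toLp] using
    (PiLp.volume_preserving_toLp (Fin d)).quasiMeasurePreserving.ae hsphere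

lemma integral_radial_smul_eq_of_moment_eq {F : Type*} [NormedAddCommGroup F] [NormedSpace ℝ F]
    {P : Vec d → F} {k : ℕ} (hP : ∀ t : ℝ, 0 < t → ∀ z, P (t • z) = t ^ k • P z)
    {γ₁ γ₂ : ℝ → ℝ} (hγ : ∫ z : Vec d, γ₁ (euclNorm z) * euclNorm z ^ k =
      ∫ z : Vec d, γ₂ (euclNorm z) * euclNorm z ^ k) :
    ∫ z : Vec d, γ₁ (euclNorm z) • P z = ∫ z : Vec d, γ₂ (euclNorm z) • P z := by
  simp only [euclNorm_eq_norm_toLp] at hγ ⊢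
  have hpolar (γ : ℝ → ℝ) := integral_radial_smul_homogeneous
    (volume : Measure (EuclideanSpace ℝ (Fin d))) (P := fun z => P (WithLp.ofLp z))
    (fun t ht z => hP t ht (WithLp.ofLp z)) γ
  simp only [← integral_comp_toLp] at hpolar
  rw [hpolar, hpolar, hγ]

end EuclNorm

section Kernel

variable {d : ℕ} {K : Vec d → ℝ} {a b : ℝ}
  {F : Type*} [NormedAddCommGroup F] [NormedSpace ℝ F] {k : ℕ}

lemma integrable_mul_apply_mul_apply (hK : AEStronglyMeasurable K)
    (hK₂ : Integrable fun z => K z * euclNorm z ^ 2) (i l : Fin d) :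
    Integrable fun z => K z * z i * z l := by
  refine hK₂.mono ((hK.mul (continuous_apply i).aestronglyMeasurable).mul
    (continuous_apply l).aestronglyMeasurable) (.of_forall fun z => ?_)
  rw [mul_assoc, norm_mul, norm_mul, norm_mul, norm_pow,
    Real.norm_of_nonneg (euclNorm_nonneg z), sq]
  gcongr
  · exact euclNorm_nonneg z
  · exact abs_apply_le_euclNorm z i
  · exact abs_apply_le_euclNorm z l

lemma integral_mul_euclNorm_sq_eq_dim (hK : AEStronglyMeasurable K)
    (hK₂ : Integrable fun z => K z * euclNorm z ^ 2)
    (hcov : ∀ i l, ∫ z, K z * z i * z l = if i = l then 1 else 0) :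
    ∫ z, K z * euclNorm z ^ 2 = d := by
  simp only [euclNorm_sq, Finset.mul_sum]
  simp only [sq, ← mul_assoc]
  rw [integral_finsetSum _ fun i _ => integrable_mul_apply_mul_apply hK hK₂ i i]
  simp [hcov]

lemma integral_mul_apply_smul_linear [CompleteSpace F] (hK : AEStronglyMeasurable K)
    (hK₂ : Integrable fun z => K z * euclNorm z ^ 2)
    (hcov : ∀ i l, ∫ z, K z * z i * z l = if i = l then 1 else 0)
    (j : Fin d) (L : Vec d →L[ℝ] F) :
    ∫ z, (K z * z j) • L z = L (Pi.single j 1) := by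
  have hcoord (z : Vec d) : L z = ∑ i, z i • L (Pi.single i 1) := by
    conv_lhs => rw [← Finset.univ_sum_single z, map_sum]
    simp only [← map_smul, ← Pi.single_smul, smul_eq_mul, mul_one]
  have hsum (z : Vec d) : (K z * z j) • L z = ∑ i, (K z * z j * z i) • L (Pi.single i 1) := by
    rw [hcoord z, Finset.smul_sum]
    simp only [smul_smul]
  simp only [hsum]
  rw [integral_finsetSum _ fun i _ =>
    (integrable_mul_apply_mul_apply hK hK₂ j i).smul_const _]
  simp [integral_smul_const, hcov]

lemma sq_fourth_moment_lt_second_mul_sixth [Nonempty (Fin d)] (hKpos : 0 ≤ K)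
    (hK₂ : ∫ z, K z * euclNorm z ^ 2 ≠ 0)
    (hK₄ : Integrable fun z => K z * euclNorm z ^ 4)
    (hK₆ : Integrable fun z => K z * euclNorm z ^ 6) :
    (∫ z, K z * euclNorm z ^ 4) ^ 2 <
      (∫ z, K z * euclNorm z ^ 2) * ∫ z, K z * euclNorm z ^ 6 := by
  have hne (c : ℝ) : ∀ᵐ z : Vec d, euclNorm z ^ 2 ≠ c := by
    filter_upwards [ae_euclNorm_ne √c] with z hz hc
    exact hz (by rw [← hc, Real.sqrt_sq (euclNorm_nonneg z)])
  have h₄ (z : Vec d) : K z * euclNorm z ^ 2 * euclNorm z ^ 2 = K z * euclNorm z ^ 4 := by ring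
  have h₆ (z : Vec d) : K z * euclNorm z ^ 2 * (euclNorm z ^ 2) ^ 2 = K z * euclNorm z ^ 6 := by
    ring
  simpa only [h₄, h₆] using sq_integral_mul_lt_integral_mul_integral_mul_sq
    (fun z => mul_nonneg (hKpos z) (sq_nonneg (euclNorm z))) hK₂ hne
    (by simpa only [h₄] using hK₄) (by simpa only [h₆] using hK₆)

lemma corrected_moment_equations {m₂ m₄ m₆ : ℝ} (hlt : m₄ ^ 2 < m₂ * m₆)
    (hb : b = m₄ / (m₆ - m₄ ^ 2 / m₂)) (ha : a = 1 + b * m₄ / m₂) :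
    a * m₂ - b * m₄ = m₂ ∧ a * m₄ - b * m₆ = 0 := by
  have hm₂ : m₂ ≠ 0 := left_ne_zero_of_mul ((sq_nonneg m₄).trans_lt hlt).ne'
  have hden : m₆ - m₄ ^ 2 / m₂ ≠ 0 := fun hzero => by
    field_simp at hzero
    linarith
  have hbden : b * (m₆ - m₄ ^ 2 / m₂) = m₄ := by rw [hb, div_mul_cancel₀ _ hden]
  constructor
  · rw [ha]
    field_simp
    ring
  · rw [ha]
    linear_combination -hbden

/-- The weight `K(z) p_j(z)` of the refined gradient estimator, where
`p_j(z) = a z_j - b ‖z‖² z_j`. -/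
def gradientWeight (K : Vec d → ℝ) (a b : ℝ) (j : Fin d) (z : Vec d) : ℝ :=
  K z * (a * z j - b * euclNorm z ^ 2 * z j)

lemma odd_gradientWeight (hK : Function.Even K) (j : Fin d) :
    Function.Odd (gradientWeight K a b j) := fun z => by
  rw [gradientWeight, gradientWeight, hK, even_euclNorm, Pi.neg_apply]
  ring

lemma integral_gradientWeight_smul_multilinear_diag_of_even (hK : Function.Even K)
    (hk : Even k) (j : Fin d) (A : Vec d [×k]→L[ℝ] F) :
    ∫ z, gradientWeight K a b j z • A (fun _ => z) = 0 := by
  have hA : Function.Even fun z => A (fun _ => z) := fun z => by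
    simpa [hk.neg_one_pow] using multilinear_diag_smul A (-1) z
  exact integral_eq_zero_of_odd ((odd_gradientWeight hK j).smul_even hA)

lemma integrable_gradientWeight_mul_norm_pow (hK : AEStronglyMeasurable K)
    (hK₁ : Integrable fun z => K z * euclNorm z ^ (k + 1))
    (hK₃ : Integrable fun z => K z * euclNorm z ^ (k + 3)) (j : Fin d) :
    Integrable fun z => gradientWeight K a b j z * ‖z‖ ^ k := by
  have hcont := continuous_euclNorm (d := d)
  have hpoly : AEStronglyMeasurable fun z : Vec d => a * z j - b * euclNorm z ^ 2 * z j := by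
    fun_prop
  refine ((hK₁.norm.const_mul |a|).add (hK₃.norm.const_mul |b|)).mono'
    ((hK.mul hpoly).mul (by fun_prop)) (.of_forall fun z => ?_)
  have hr := euclNorm_nonneg z
  have hfactor : |a - b * euclNorm z ^ 2| ≤ |a| + |b| * euclNorm z ^ 2 := by
    refine (abs_sub _ _).trans_eq ?_
    rw [abs_mul, abs_of_nonneg (sq_nonneg (euclNorm z))]
  calc ‖gradientWeight K a b j z * ‖z‖ ^ k‖
      = |K z| * (|a - b * euclNorm z ^ 2| * |z j|) * ‖z‖ ^ k := by
        rw [gradientWeight, ← sub_mul, norm_mul, norm_mul, norm_mul, norm_pow, norm_norm]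
        simp only [Real.norm_eq_abs]
    _ ≤ |K z| * ((|a| + |b| * euclNorm z ^ 2) * euclNorm z) * euclNorm z ^ k := by
        gcongr
        · exact abs_apply_le_euclNorm z j
        · exact norm_le_euclNorm z
    _ = |a| * ‖K z * euclNorm z ^ (k + 1)‖ + |b| * ‖K z * euclNorm z ^ (k + 3)‖ := by
        simp only [norm_mul, norm_pow, Real.norm_eq_abs, abs_of_nonneg hr]
        ring

lemma integral_gradientWeight_smul_eq_of_moment_eq {κ : ℝ → ℝ}
    (hκ : ∀ z, K z = κ (euclNorm z)) {P : Vec d → F}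
    (hP : ∀ t : ℝ, 0 < t → ∀ z, P (t • z) = t ^ k • P z)
    (hK₁ : Integrable fun z => K z * euclNorm z ^ (k + 1))
    (hK₃ : Integrable fun z => K z * euclNorm z ^ (k + 3)) {c : ℝ}
    (hmom : a * (∫ z, K z * euclNorm z ^ (k + 1)) - b * (∫ z, K z * euclNorm z ^ (k + 3)) =
      c * ∫ z, K z * euclNorm z ^ (k + 1)) (j : Fin d) :
    ∫ z, gradientWeight K a b j z • P z = c • ∫ z, (K z * z j) • P z := by
  have : Nonempty (Fin d) := ⟨j⟩
  have hhom (t : ℝ) (ht : 0 < t) (z : Vec d) :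
      (t • z) j • P (t • z) = t ^ (k + 1) • z j • P z := by
    rw [hP t ht, Pi.smul_apply, smul_eq_mul, smul_smul, smul_smul, pow_succ]
    congr 1
    ring
  have hprofile : ∫ z : Vec d, κ (euclNorm z) * (a - b * euclNorm z ^ 2) * euclNorm z ^ (k + 1) =
      ∫ z : Vec d, c * κ (euclNorm z) * euclNorm z ^ (k + 1) := by
    simp only [← hκ, mul_assoc c, integral_const_mul, ← hmom]
    rw [← integral_const_mul, ← integral_const_mul,
      ← integral_sub (hK₁.const_mul a) (hK₃.const_mul b)]
    congr with z
    ring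
  rw [← integral_smul]
  convert integral_radial_smul_eq_of_moment_eq (P := fun z => z j • P z) hhom
    (γ₁ := fun r => κ r * (a - b * r ^ 2)) (γ₂ := fun r => c * κ r) hprofile using 3 with z z
  · rw [gradientWeight, hκ, smul_smul]
    congr 1
    ring
  · rw [hκ, smul_smul, smul_smul]
    congr 1
    ring

end Kernel

theorem statement6_general {F : Type*} [NormedAddCommGroup F] [NormedSpace ℝ F] [CompleteSpace F]
    {d : ℕ} {f : Vec d → F} (hf : ContDiff ℝ 4 f) {C : ℝ}
    (hfb : ∀ x, ‖iteratedFDeriv ℝ 4 f x‖ ≤ C)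
    {K : Vec d → ℝ} (hKpos : ∀ z, 0 ≤ K z) (hK : Integrable fun z => K z)
    (hK₇ : Integrable fun z => K z * euclNorm z ^ 7)
    {κ : ℝ → ℝ} (hκ : ∀ z, K z = κ (euclNorm z))
    (hcov : ∀ i j, ∫ z, K z * z i * z j = if i = j then 1 else 0)
    {m4 m6 a b : ℝ} (hm4 : m4 = ∫ z, K z * euclNorm z ^ 4) (hm6 : m6 = ∫ z, K z * euclNorm z ^ 6)
    (hb : b = m4 / (m6 - m4 ^ 2 / d)) (ha : a = 1 + b * m4 / d)
    {ι : Type*} {l : Filter ι} [l.IsCountablyGenerated] {x : ι → Vec d} {x₀ : Vec d} {h : ι → ℝ}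
    (hx : Tendsto x l (𝓝 x₀)) (hh : Tendsto h l (𝓝[≠] 0)) (j : Fin d) :
    Tendsto (fun i => (h i ^ 4)⁻¹ •
      ((∫ z, (K z * (a * z j - b * euclNorm z ^ 2 * z j)) • f (x i + h i • z)) -
        h i • fderiv ℝ f (x i) (Pi.single j 1))) l (𝓝 0) := by
  have : Nonempty (Fin d) := ⟨j⟩
  have hmom {k : ℕ} (hk : k ≤ 7) : Integrable fun z => K z * euclNorm z ^ k :=
    integrable_mul_pow_of_le hk euclNorm_nonneg continuous_euclNorm.aestronglyMeasurable hK hK₇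
  have hm2 : ∫ z, K z * euclNorm z ^ 2 = d :=
    integral_mul_euclNorm_sq_eq_dim hK.aestronglyMeasurable (hmom (by norm_num)) hcov
  have hd : (d : ℝ) ≠ 0 := Nat.cast_ne_zero.2 (Fin.pos j).ne'
  obtain ⟨hlinear, hcubic⟩ : a * d - b * m4 = d ∧ a * m4 - b * m6 = 0 := by
    have hlt := sq_fourth_moment_lt_second_mul_sixth hKpos (hm2 ▸ hd)
      (hmom (by norm_num)) (hmom (by norm_num))
    rw [hm2, ← hm4, ← hm6] at hlt
    exact corrected_moment_equations hlt hb ha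
  have hKeven : Function.Even K := fun z => by rw [hκ, hκ, even_euclNorm]
  have heven {k : ℕ} (hk : Even k) (y : Vec d) :=
    integral_gradientWeight_smul_multilinear_diag_of_even (a := a) (b := b) hKeven hk j
      (iteratedFDeriv ℝ k f y)
  have hfirst (y : Vec d) :
      ∫ z, gradientWeight K a b j z • iteratedFDeriv ℝ 1 f y (fun _ => z) =
        fderiv ℝ f y (Pi.single j 1) := by
    rw [integral_gradientWeight_smul_eq_of_moment_eq (k := 1) (c := 1) hκ
      (fun t _ z => multilinear_diag_smul _ t z) (hmom (by norm_num)) (hmom (by norm_num))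
      (by simpa [hm2, ← hm4] using hlinear), one_smul]
    simpa using integral_mul_apply_smul_linear hK.aestronglyMeasurable (hmom (by norm_num)) hcov j
      (fderiv ℝ f y)
  have hthird (y : Vec d) :
      ∫ z, gradientWeight K a b j z • iteratedFDeriv ℝ 3 f y (fun _ => z) = 0 := by
    rw [integral_gradientWeight_smul_eq_of_moment_eq (k := 3) (c := 0) hκ
      (fun t _ z => multilinear_diag_smul _ t z) (hmom (by norm_num)) (hmom (by norm_num))
      (by simpa [← hm4, ← hm6] using hcubic), zero_smul]
  have hexpansion := tendsto_integral_smul_comp_add_smul_sub_sum (n := 3) hf hfb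
    (fun k hk => integrable_gradientWeight_mul_norm_pow (a := a) (b := b)
      hK.aestronglyMeasurable (hmom (by omega)) (hmom (by omega)) j) hx hh
  simp only [Finset.sum_range_succ, Finset.sum_range_zero, heven Even.zero, hfirst,
    heven even_two, hthird, heven (by decide : Even (3 + 1))] at hexpansion
  simpa [gradientWeight] using hexpansion

/-- for a spherically symmetric kernel and the refined polynomial
`p_j(z) = a z_j - b‖z‖² z_j`, the bias of the refined gradient estimator is `o(h⁴)`:
`∫ K(z) p_j(z) f(x_n + h_n z) dz = h_n f^{(e_j)}(x_n) + o(h_n⁴)`. -/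
theorem statement6 {d : ℕ} (hd : 1 ≤ d)
    (f : Vec d → ℝ) (hf : ContDiff ℝ (4 : ℕ∞) f)
    (hfb : ∀ n : ℕ, n ≤ 4 → ∃ C : ℝ, ∀ x : Vec d, ‖iteratedFDeriv ℝ n f x‖ ≤ C)
    (hfpos : ∀ x, 0 ≤ f x) (hfint : (∫ x : Vec d, f x) = 1)
    (K : Vec d → ℝ) (hKmeas : Measurable K) (hKpos : ∀ z, 0 ≤ K z)
    (hKbd : ∃ C : ℝ, ∀ z, K z ≤ C)
    (hKmom : ∀ r : ℝ, 0 < r → Integrable (fun z => K z * euclNorm z ^ r))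
    (hK0 : (∫ z : Vec d, K z) = 1)
    (hK1 : ∃ κ : ℝ → ℝ, (∀ t, 0 ≤ κ t) ∧ ∀ z : Vec d, K z = κ (euclNorm z))
    (hK2 : ∀ i j : Fin d, (∫ z : Vec d, K z * z i * z j) = if i = j then 1 else 0)
    (m4 m6 a b : ℝ)
    (hm4 : m4 = ∫ z : Vec d, K z * euclNorm z ^ 4)
    (hm6 : m6 = ∫ z : Vec d, K z * euclNorm z ^ 6)
    (hb : b = m4 / (m6 - m4 ^ 2 / d))
    (ha : a = 1 + b * m4 / d)
    (x_o : Vec d) (h : ℕ → ℝ) (hh : ∀ n, 0 < h n) (hh0 : Tendsto h atTop (𝓝 0))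
    (x : ℕ → Vec d) (hx : Tendsto x atTop (𝓝 x_o)) :
    ∀ j : Fin d, Tendsto
      (fun n => ((∫ z : Vec d, K z * (a * z j - b * euclNorm z ^ 2 * z j) *
          f (x n + h n • z)) - h n * fderiv ℝ f (x n) (Pi.single j 1)) / h n ^ 4)
      atTop (𝓝 0) := by
  intro j
  obtain ⟨κ, -, hκ⟩ := hK1
  obtain ⟨C, hC⟩ := hfb 4 le_rfl
  have hK : Integrable fun z => K z := .of_integral_ne_zero (by rw [hK0]; exact one_ne_zero)
  have hK₇ : Integrable fun z => K z * euclNorm z ^ 7 := by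
    simpa using mod_cast hKmom 7 (by norm_num)
  have hh' : Tendsto h atTop (𝓝[≠] 0) :=
    tendsto_nhdsWithin_iff.2 ⟨hh0, .of_forall fun n => (hh n).ne'⟩
  simpa only [smul_eq_mul, ← div_eq_inv_mul] using statement6_general (mod_cast hf) hC hKpos hK hK₇
    hκ hK2 hm4 hm6 hb ha hx hh' j
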